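/- Coding lemma: let P be a computable probability on (Ω², B_{S²}) and A ⊆ S² a decidable set satisfying condition (4). Then there is a computable monotone function g : S∪Ω → (S∪Ω)² and a constant c such that Km_g(x) ≤ −log P(x) + c for every x∞ ∈ Ω² and every x ∈ A(x∞). -/

import Mathlib

/-!
The proof is arithmetic coding. The standard code of `S × S` never decreases along the prefix
order, so in the order of codes an element of `A` comes after all its proper prefixes. Call `z ∈ A`
*before* `y ∈ A` (`Before`) if `z` has a smaller code, is not a prefix of `y`, and the elements of
`A` with smaller codes than `z` do not separate `z` from `y`. There are finitely many such `z`, and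
by condition (4) their cylinders are pairwise disjoint and disjoint from that of `y`. Let `leftEnd y`
be the probability of their union and assign to `y` the interval
`[leftEnd y, leftEnd y + P(y)] ⊆ [0, 1]`. Intervals of incomparable elements do not overlap
(`leftEnd_total`): the element `w` of `A` of least code that is a prefix of exactly one of `y` and
`y'` decides which of the two is to the left, and the inequality holds already as an inclusion of
regions of `Ω²`, so that null cylinders and infinitely branching `A` need no separate treatment.

A string `p` stands for the dyadic interval of length `2^{-|p|}` that it determines. The set `F`
consists of the pairs `(p, ([], []))` and of the pairs `(p, y)` for which some `k`-th rational
approximation certifies (`Cert`) that the interval of `p` lies in that of `y`. Certificates are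
decidable, so `F` is r.e.; if `p ⊑ p'` and `(p, x)`, `(p', y)` are in `F`, the intervals of `x` and
`y` both contain that of `p'`, hence `x` and `y` are comparable, and the chains that arise have
least upper bounds (`exists_sup2`). An interval of length `P(x) > 0` contains a dyadic interval of
length at least `P(x) / 8` in its interior (`exists_dyadic`), and strict inclusion is always
certified by some `k` (`exists_cert`); this gives the bound with `c = 3`.

The given approximations take values in `ℚ`, whose code in `Primcodable ℚ` is obtained by ranking
the codes of reduced fractions. `computable_rat_pair` shows that numerator and denominator can be
computed from it; all further arithmetic is on natural numbers.
-/

open MeasureTheory Filter Set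
open scoped ENNReal NNReal

namespace AlgRand

/-- `S` : finite binary strings. -/
abbrev S : Type := List Bool

/-- `Seq` : infinite binary sequences (the space Ω). -/
abbrev Seq : Type := ℕ → Bool

/-- A finite string is a prefix of an infinite sequence. -/
def PrefixSeq (x : S) (ω : Seq) : Prop := ∀ i : Fin x.length, x.get i = ω i

/-- The first `n` bits of an infinite sequence. -/
def seqTake (ω : Seq) (n : ℕ) : S := List.ofFn fun i : Fin n => ω i

/-- Cylinder set Δ(x) ⊆ Ω. -/
def cyl (x : S) : Set Seq := {ω | PrefixSeq x ω}

/-- Product cylinder Δ(x,y) ⊆ Ω². -/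
def cyl2 (xy : S × S) : Set (Seq × Seq) := cyl xy.1 ×ˢ cyl xy.2

/-- Prefix (partial order) on S². -/
def Pre2 (a b : S × S) : Prop := a.1 <+: b.1 ∧ a.2 <+: b.2

/-- A pair of strings is a (strict) prefix of a pair of sequences. -/
def Pre2Seq (a : S × S) (ω : Seq × Seq) : Prop := PrefixSeq a.1 ω.1 ∧ PrefixSeq a.2 ω.2

/-- Recursively enumerable subset of a primcodable type. -/
def RESet {β : Type} [Primcodable β] (A : Set β) : Prop :=
  ∃ f : ℕ → Option β, Computable f ∧ A = {a | ∃ n, f n = some a}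

/-- A computable probability measure on Ω. -/
def ComputableProb (P : Measure Seq) : Prop :=
  IsProbabilityMeasure P ∧
    ∃ p : S × ℕ → ℚ, Computable p ∧
      ∀ (x : S) (k : ℕ), 0 < k → |(P (cyl x)).toReal - (p (x, k) : ℝ)| < 1 / k

/-- A computable probability measure on Ω². -/
def ComputableProb2 (P : Measure (Seq × Seq)) : Prop :=
  IsProbabilityMeasure P ∧
    ∃ p : (S × S) × ℕ → ℚ, Computable p ∧
      ∀ (xy : S × S) (k : ℕ), 0 < k → |(P (cyl2 xy)).toReal - (p (xy, k) : ℝ)| < 1 / k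

/-- Ũ_n, the open set covered by the n-th level of a test. -/
def testUnion {α β : Type} (C : β → Set α) (U : Set (ℕ × β)) (n : ℕ) : Set α :=
  ⋃ x ∈ {x | (n, x) ∈ U}, C x

/-- Martin-Löf test w.r.t. a measure, generic in the cylinder function `C`. -/
def IsMLTest {α β : Type} [MeasurableSpace α] [Primcodable β]
    (C : β → Set α) (P : Measure α) (U : Set (ℕ × β)) : Prop :=
  RESet U ∧ (∀ n, testUnion C U (n + 1) ⊆ testUnion C U n) ∧
    ∀ n, P (testUnion C U n) < (2⁻¹ : ℝ≥0∞) ^ n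

/-- Martin-Löf randomness: ω avoids the limit of every test. -/
def MLRandom {α β : Type} [MeasurableSpace α] [Primcodable β]
    (C : β → Set α) (P : Measure α) (ω : α) : Prop :=
  ∀ U, IsMLTest C P U → ω ∉ ⋂ n, testUnion C U n

/-- ω ∈ R^P, for P on Ω. -/
abbrev Random1 (P : Measure Seq) (ω : Seq) : Prop := MLRandom cyl P ω

/-- ω ∈ R^P, for P on Ω². -/
abbrev Random2 (P : Measure (Seq × Seq)) (ω : Seq × Seq) : Prop := MLRandom cyl2 P ω

/-- Marginal distribution P_X on the first coordinate. -/
noncomputable def margX (P : Measure (Seq × Seq)) : Measure Seq := P.map Prod.fst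

/-- Marginal distribution P_Y on the second coordinate. -/
noncomputable def margY (P : Measure (Seq × Seq)) : Measure Seq := P.map Prod.snd

/-- Conditional probability P(x|y) = P(x,y)/P_Y(y), with value 0 when P_Y(y) = 0. -/
noncomputable def condP (P : Measure (Seq × Seq)) (x y : S) : ℝ :=
  (P (cyl2 (x, y))).toReal / (P (Set.univ ×ˢ cyl y)).toReal

/-- P(x|yinf) := lim_{y → yinf} P(x|y) along prefixes of yinf (junk value if no limit). -/
noncomputable def condPLim (P : Measure (Seq × Seq)) (x : S) (yinf : Seq) : ℝ :=
  limUnder atTop fun m => condP P x (seqTake yinf m)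

/-- Conditional probability P(y|x) = P(x,y)/P_X(x), with value 0 when P_X(x) = 0. -/
noncomputable def condX (P : Measure (Seq × Seq)) (y x : S) : ℝ :=
  (P (cyl2 (x, y))).toReal / (P (cyl x ×ˢ Set.univ)).toReal

/-- P(y|xinf) := lim_{x → xinf} P(y|x) along prefixes of xinf (junk value if no limit). -/
noncomputable def condXLim (P : Measure (Seq × Seq)) (y : S) (xinf : Seq) : ℝ :=
  limUnder atTop fun m => condX P y (seqTake xinf m)

/-- The set S ∪ Ω of finite or infinite binary sequences. -/
inductive SW : Type where
  | fin : S → SW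
  | inf : Seq → SW

/-- Prefix order ⊑ on S ∪ Ω. -/
def SW.le : SW → SW → Prop
  | .fin x, .fin y => x <+: y
  | .fin x, .inf ω => PrefixSeq x ω
  | .inf ω, .inf ω' => ω = ω'
  | .inf _, .fin _ => False

/-- (S ∪ Ω)². -/
abbrev SW2 : Type := SW × SW

/-- Componentwise prefix order ⊑ on (S ∪ Ω)². -/
def SW2.le (a b : SW2) : Prop := SW.le a.1 b.1 ∧ SW.le a.2 b.2

/-- Length |x| ∈ ℕ∞ of an element of S ∪ Ω. -/
def SW.len : SW → ℕ∞
  | .fin x => (x.length : ℕ∞)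
  | .inf _ => ⊤

/-- |p| = |p₁| + |p₂| for p ∈ (S ∪ Ω)². -/
def SW2.len (a : SW2) : ℕ∞ := SW.len a.1 + SW.len a.2

/-- Δ(x) for x ∈ S ∪ Ω. -/
def SW.cylW : SW → Set Seq
  | .fin x => cyl x
  | .inf ω => {ω}

/-- Δ(x,y) for (x,y) ∈ (S ∪ Ω)². -/
def SW2.cylW (a : SW2) : Set (Seq × Seq) := SW.cylW a.1 ×ˢ SW.cylW a.2

/-- Embedding S → S ∪ Ω. -/
def emb1 (x : S) : SW := SW.fin x

/-- Embedding S² → (S ∪ Ω)². -/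
def emb2 (p : S × S) : SW2 := (SW.fin p.1, SW.fin p.2)

/-- Embedding Ω² → (S ∪ Ω)². -/
def inf2 (ω : Seq × Seq) : SW2 := (SW.inf ω.1, SW.inf ω.2)

/-- Least upper bound with respect to a relation. -/
def IsSupRel {V : Type} (le : V → V → Prop) (A : Set V) (s : V) : Prop :=
  (∀ a ∈ A, le a s) ∧ ∀ b, (∀ a ∈ A, le a b) → le s b

/-- `f` is a computable monotone function defined by an r.e. set `F` satisfying
condition (3) of the paper:  (λ,λ) ∈ F_p and ⋁_{p'⊑p} F_{p'} exists for every p,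
and f(q) = ⋁ {x : ∃ p' ⊑ q, (p',x) ∈ F}. -/
def CompMono {D E : Type} {W V : Type} [Primcodable D] [Primcodable E]
    (embD : D → W) (leW : W → W → Prop) (embE : E → V) (leV : V → V → Prop)
    (eps : E) (f : W → V) : Prop :=
  ∃ F : Set (D × E), RESet F ∧
    (∀ p : D, (p, eps) ∈ F ∧
        ∃ s, IsSupRel leV (embE '' {x | ∃ p' : D, leW (embD p') (embD p) ∧ (p', x) ∈ F}) s) ∧
    ∀ q : W, IsSupRel leV (embE '' {x | ∃ p' : D, leW (embD p') q ∧ (p', x) ∈ F}) (f q)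

/-- Computable monotone function (S ∪ Ω)² → (S ∪ Ω)². -/
def CompMono22 (f : SW2 → SW2) : Prop := CompMono emb2 SW2.le emb2 SW2.le (([], []) : S × S) f

/-- Computable monotone function S ∪ Ω → (S ∪ Ω)². -/
def CompMono12 (g : SW → SW2) : Prop := CompMono emb1 SW.le emb2 SW2.le (([], []) : S × S) g

/-- Computable monotone function (S ∪ Ω)² → S ∪ Ω. -/
def CompMono21 (e : SW2 → SW) : Prop := CompMono emb2 SW2.le emb1 SW.le ([] : S) e

/-- Computable monotone function S ∪ Ω → S ∪ Ω. -/
def CompMono11 (ρ : SW → SW) : Prop := CompMono emb1 SW.le emb1 SW.le ([] : S) ρ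

/-- Km²_f(x) := min{|p₁|+|p₂| : x ⊑ f(p₁,p₂)} ∈ ℕ∞. -/
noncomputable def Km2 (f : SW2 → SW2) (x : SW2) : ℕ∞ :=
  ⨅ (p : SW2) (_ : SW2.le x (f p)), SW2.len p

/-- Km_f(x) := min{|p| : x ⊑ f(p,λ)} ∈ ℕ∞. -/
noncomputable def Km1 (f : SW2 → SW2) (x : SW2) : ℕ∞ :=
  ⨅ (p : SW) (_ : SW2.le x (f (p, SW.fin []))), SW.len p

/-- Km(x|y) := min{|p| : (x,λ) ⊑ u(p,y)} ∈ ℕ∞. -/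
noncomputable def KmCond (u : SW2 → SW2) (x y : SW) : ℕ∞ :=
  ⨅ (p : SW) (_ : SW2.le (x, SW.fin []) (u (p, y))), SW.len p

/-- Km_g(x) := min{|p| : x ⊑ g(p)} for g : S ∪ Ω → (S ∪ Ω)². -/
noncomputable def KmOf12 (g : SW → SW2) (x : SW2) : ℕ∞ :=
  ⨅ (p : SW) (_ : SW2.le x (g p)), SW.len p

/-- Optimality of a computable monotone function on (S ∪ Ω)². -/
def Optimal (u : SW2 → SW2) : Prop :=
  CompMono22 u ∧
    ∀ f : SW2 → SW2, CompMono22 f → ∃ c : ℕ, ∀ x : SW2, Km2 u x ≤ Km2 f x + (c : ℕ∞)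

/-- 2^{-n} for n ∈ ℕ∞ (with 2^{-∞} = 0), as an extended nonnegative real. -/
noncomputable def tpow (n : ℕ∞) : ℝ≥0∞ := if n = ⊤ then 0 else (2⁻¹ : ℝ≥0∞) ^ n.toNat

/-- Non-overlapping subset of (S ∪ Ω)². -/
def NonOverlapW (A : Set SW2) : Prop := A.Pairwise fun a b => SW2.cylW a ∩ SW2.cylW b = ∅

/-- Non-overlapping subset of S². -/
def NonOverlapF (A : Set (S × S)) : Prop := A.Pairwise fun a b => cyl2 a ∩ cyl2 b = ∅

/-- Condition (4): any two members of A are comparable or have disjoint cylinders. -/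
def Cond4 (A : Set (S × S)) : Prop :=
  ∀ a ∈ A, ∀ b ∈ A, Pre2 a b ∨ Pre2 b a ∨ cyl2 a ∩ cyl2 b = ∅

/-- Condition (5): relative complements of cylinders are non-overlapping unions within A. -/
def Cond5 (A : Set (S × S)) : Prop :=
  ∀ a ∈ A, ∀ b ∈ A, ∃ α ⊆ A, NonOverlapF α ∧ cyl2 a ∩ (cyl2 b)ᶜ = ⋃ z ∈ α, cyl2 z

/-- A(xinf) := {x ∈ A | x ⊏ xinf}. -/
def Asec (A : Set (S × S)) (ω : Seq × Seq) : Set (S × S) := {a ∈ A | Pre2Seq a ω}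

/-- sup_{x ∈ A} (−log P(x) − K(x)) < ∞. -/
def KmBound (P : Measure (Seq × Seq)) (K : S × S → ℕ∞) (A : Set (S × S)) : Prop :=
  ∃ c : ℝ, ∀ x ∈ A, ∀ k : ℕ, K x = (k : ℕ∞) →
    0 < P (cyl2 x) ∧ -Real.logb 2 ((P (cyl2 x)).toReal) ≤ (k : ℝ) + c

/-- sup_{x ∈ A} |log P(x) + K(x)| < ∞. -/
def KmBoundAbs (P : Measure (Seq × Seq)) (K : S × S → ℕ∞) (A : Set (S × S)) : Prop :=
  ∃ c : ℝ, ∀ x ∈ A, ∃ k : ℕ, K x = (k : ℕ∞) ∧ 0 < P (cyl2 x) ∧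
    |Real.logb 2 ((P (cyl2 x)).toReal) + (k : ℝ)| ≤ c

/-- The conditional probability P(·|yinf) is computable relative to the oracle yinf:
there is a partial computable A(x,y,k), monotone in y, approximating P(x|yinf)
to within 1/k along prefixes y of yinf. -/
def CondComputableAt (P : Measure (Seq × Seq)) (yinf : Seq) : Prop :=
  ∃ A : (S × S) × ℕ →. ℚ, Partrec A ∧
    (∀ (x y z : S) (k : ℕ) (q : ℚ), q ∈ A ((x, y), k) → y <+: z → q ∈ A ((x, z), k)) ∧
    ∀ (x : S) (k : ℕ), 0 < k → ∃ (m : ℕ) (q : ℚ), q ∈ A ((x, seqTake yinf m), k) ∧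
      |condPLim P x yinf - (q : ℝ)| < 1 / k

/-- A Martin-Löf test w.r.t. Q which is r.e. relative to the oracle yinf. -/
def RelMLTest (Q : Measure Seq) (yinf : Seq) (U : ℕ → Set S) : Prop :=
  (∃ B : (ℕ × ℕ) × S →. S, Partrec B ∧
      (∀ (i n : ℕ) (y z x : S), x ∈ B ((i, n), y) → y <+: z → x ∈ B ((i, n), z)) ∧
      ∀ n, U n = {x | ∃ i m, x ∈ B ((i, n), seqTake yinf m)}) ∧
  (∀ n, (⋃ x ∈ U (n + 1), cyl x) ⊆ ⋃ x ∈ U n, cyl x) ∧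
  ∀ n, Q (⋃ x ∈ U n, cyl x) < (2⁻¹ : ℝ≥0∞) ^ n

/-- Martin-Löf randomness w.r.t. Q relative to the oracle yinf. -/
def RelMLRandom (Q : Measure Seq) (yinf xinf : Seq) : Prop :=
  ∀ U, RelMLTest Q yinf U → xinf ∉ ⋂ n, ⋃ x ∈ U n, cyl x

/-- Likelihood ratio r(x) = Q(x)/P(x), with value 0 when P(x) = 0. -/
noncomputable def ratio (P Q : Measure Seq) (x : S) : ℝ :=
  (Q (cyl x)).toReal / (P (cyl x)).toReal

/-- P(·|yinf) f,(xinf,yinf)-effectively converges with rate g. -/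
def EffConv (P : Measure (Seq × Seq)) (xinf yinf : Seq) (f : ℕ → ℚ) (g : ℕ → ℕ) : Prop :=
  Computable g ∧ Monotone g ∧
    ∀ x y : S, PrefixSeq x xinf → PrefixSeq y yinf → g x.length ≤ y.length →
      |condP P x y / condPLim P x yinf - 1| < (f x.length : ℝ)

/-- A_g(xinf,yinf) := {(x,y) : |y| = g(|x|), (x,y) ⊏ (xinf,yinf)}. -/
def AgSec (g : ℕ → ℕ) (xinf yinf : Seq) : Set (S × S) :=
  {xy | xy.2.length = g xy.1.length ∧ PrefixSeq xy.1 xinf ∧ PrefixSeq xy.2 yinf}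

/-- A uniformly computable family of probability measures on Ω. -/
def UnifComputableFam (Pn : ℕ → Measure Seq) : Prop :=
  (∀ n, IsProbabilityMeasure (Pn n)) ∧
    ∃ A : (ℕ × S) × ℕ → ℚ, Computable A ∧
      ∀ (n : ℕ) (x : S) (k : ℕ), 0 < k →
        |(A ((n, x), k) : ℝ) - ((Pn n) (cyl x)).toReal| < 1 / k

/-- A computable sequence of reals (e.g. a computable probability on ℕ). -/
def ComputableRealSeq (α : ℕ → ℝ) : Prop :=
  ∃ a : ℕ × ℕ → ℚ, Computable a ∧ ∀ (n k : ℕ), 0 < k → |α n - (a (n, k) : ℝ)| < 1 / k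

/-- The mixture Σ_n α(n) P_n. -/
noncomputable def mixture (α : ℕ → ℝ) (Pn : ℕ → Measure Seq) : Measure Seq :=
  Measure.sum fun n => ENNReal.ofReal (α n) • Pn n

/-- The conditional probability measure P(·|y) on Ω, for a finite string y. -/
noncomputable def condMeasGivenY (P : Measure (Seq × Seq)) (y : S) : Measure Seq :=
  (P (Set.univ ×ˢ cyl y))⁻¹ • ((P.restrict (Set.univ ×ˢ cyl y)).map Prod.fst)

/-- The posterior distribution P_{Y|X}(·|x) on Ω, for a finite string x. -/
noncomputable def postMeas (P : Measure (Seq × Seq)) (x : S) : Measure Seq :=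
  (P (cyl x ×ˢ Set.univ))⁻¹ • ((P.restrict (cyl x ×ˢ Set.univ)).map Prod.snd)

/-! ### Computability of rational approximations -/

open Encodable in
/-- The code of a rational in `Primcodable ℚ` is the rank of the code of its reduced fraction, so
the latter is recovered by searching for the reduced fraction of the given rank. -/
theorem computable_rat_pair :
    Computable fun q : ℚ => (@encode ℤ _ q.num, q.den) := by
  classical
  let e : ℚ → ℕ := @encode ℚ Rat.instEncodable
  have hinj : Function.Injective e := @encode_injective ℚ Rat.instEncodable
  have hrange : PrimrecPred fun n : ℕ => n ∈ Set.range e := by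
    have h1 : PrimrecPred fun n : ℕ => 0 < n.unpair.2 ∧
        ∀ x < n.unpair.2 + 1, ¬ (1 < x ∧ ((n.unpair.1 + 1) / 2) % x = 0 ∧ n.unpair.2 % x = 0) := by
      have hu1 : Primrec fun n : ℕ => n.unpair.1 := Primrec.fst.comp Primrec.unpair
      have hu2 : Primrec fun n : ℕ => n.unpair.2 := Primrec.snd.comp Primrec.unpair
      refine (Primrec.nat_lt.comp (Primrec.const 0) hu2).and ?_
      have hR : PrimrecRel fun (x n : ℕ) =>
          ¬ (1 < x ∧ ((n.unpair.1 + 1) / 2) % x = 0 ∧ n.unpair.2 % x = 0) := by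
        refine PrimrecPred.not ?_
        refine (Primrec.nat_lt.comp (Primrec.const 1) Primrec.fst).and (PrimrecPred.and ?_ ?_)
        · exact Primrec.eq.comp (Primrec.nat_mod.comp (Primrec.nat_div.comp
            (Primrec.succ.comp (hu1.comp Primrec.snd)) (Primrec.const 2)) Primrec.fst)
            (Primrec.const 0)
        · exact Primrec.eq.comp (Primrec.nat_mod.comp (hu2.comp Primrec.snd) Primrec.fst)
            (Primrec.const 0)
      exact (PrimrecRel.forall_lt hR).comp (Primrec.succ.comp hu2) Primrec.id
    refine h1.of_eq fun n => ?_
    have habs : ∀ z : ℤ, (@encode ℤ _ z + 1) / 2 = z.natAbs := by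
      rintro (m | m)
      · change (2 * m + 1) / 2 = m
        omega
      · change (2 * m + 1 + 1) / 2 = m + 1
        omega
    obtain ⟨z, hz⟩ : ∃ z : ℤ, @encode ℤ _ z = n.unpair.1 :=
      ⟨Equiv.intEquivNat.symm n.unpair.1, Equiv.intEquivNat.apply_symm_apply _⟩
    have hcop : (0 < n.unpair.2 ∧ ∀ x < n.unpair.2 + 1,
        ¬ (1 < x ∧ ((n.unpair.1 + 1) / 2) % x = 0 ∧ n.unpair.2 % x = 0)) ↔
        0 < n.unpair.2 ∧ z.natAbs.Coprime n.unpair.2 := by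
      refine and_congr_right fun hpos => ?_
      rw [← hz, habs]
      constructor
      · intro h
        by_contra hne
        have hd := Nat.gcd_dvd_right z.natAbs n.unpair.2
        have h0 : 0 < z.natAbs.gcd n.unpair.2 := Nat.gcd_pos_of_pos_right _ hpos
        have h2 : z.natAbs.gcd n.unpair.2 ≠ 1 := hne
        exact h _ (Nat.lt_succ_of_le (Nat.le_of_dvd hpos hd)) ⟨by omega,
          Nat.mod_eq_zero_of_dvd (Nat.gcd_dvd_left _ _), Nat.mod_eq_zero_of_dvd hd⟩
      · rintro h x - ⟨hx, h1, h2⟩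
        exact absurd (Nat.eq_one_of_dvd_coprimes h (Nat.dvd_of_mod_eq_zero h1)
          (Nat.dvd_of_mod_eq_zero h2)) (by omega)
    rw [hcop]
    constructor
    · rintro ⟨h1, h2⟩
      refine ⟨⟨z, n.unpair.2, h1.ne', h2⟩, ?_⟩
      change Nat.pair (@encode ℤ _ z) n.unpair.2 = n
      rw [hz, Nat.pair_unpair]
    · rintro ⟨q, rfl⟩
      have hq : (e q).unpair = (@encode ℤ _ q.num, q.den) := Nat.unpair_pair _ _
      rw [hq] at hz ⊢
      have : z = q.num := encode_injective hz
      subst this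
      exact ⟨q.den_pos, q.reduced⟩
  have hcount : ∀ q : ℚ, @encode ℚ Primcodable.toEncodable q =
      Nat.count (fun n => n ∈ Set.range e) (e q) := by
    intro q
    have : @encode ℚ (Primcodable.toEncodable) q = (List.range (e q)).countP
      (fun a => @decide (a ∈ Set.range e)
        (@Encodable.decidableRangeEncode ℚ Rat.instEncodable a)) := rfl
    rw [this, Nat.count]
    congr!
  have hcprim : Primrec fun n => Nat.count (fun n => n ∈ Set.range e) n := by
    have : Primrec fun n : ℕ => Nat.rec (motive := fun _ => ℕ) 0
        (fun i acc => if i ∈ Set.range e then acc + 1 else acc) n := by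
      refine Primrec.nat_rec₁ 0 ?_
      exact Primrec.ite (hrange.comp Primrec.fst) (Primrec.succ.comp Primrec.snd) Primrec.snd
    refine this.of_eq fun n => ?_
    induction n with
    | zero => rfl
    | succ n ih => simp only [Nat.count_succ, ← ih]; split_ifs <;> rfl
  have hex : ∀ q : ℚ, ∃ n, n ∈ Set.range e ∧
      Nat.count (fun n => n ∈ Set.range e) n = @encode ℚ Primcodable.toEncodable q :=
    fun q => ⟨e q, ⟨q, rfl⟩, (hcount q).symm⟩
  have hfind : Computable fun q => Nat.find (hex q) := by
    refine Computable.find (P := fun (q : ℚ) n => n ∈ Set.range e ∧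
      Nat.count (fun n => n ∈ Set.range e) n = @encode ℚ Primcodable.toEncodable q) ?_ hex
    exact ((hrange.comp Primrec.snd).and
      (Primrec.eq.comp (hcprim.comp Primrec.snd) (Primrec.encode.comp Primrec.fst))).computablePred
  have heq : ∀ q, Nat.find (hex q) = e q := fun q => by
    have h := Nat.find_spec (hex q)
    exact Nat.count_injective h.1 ⟨q, rfl⟩ (h.2.trans (hcount q))
  refine (Computable.unpair.comp hfind).of_eq fun q => ?_
  rw [heq]
  exact Nat.unpair_pair _ _

/-- The integer `⌊q⁺ k⌋`; it approximates `r * k` if `q` is within `1 / k` of the real `r ≥ 0`. -/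
def approx (q : ℚ) (k : ℕ) : ℕ := q.num.toNat * k / q.den

theorem computable_approx {α : Type} [Primcodable α] {p : α × ℕ → ℚ} (hp : Computable p) :
    Computable fun a : α × ℕ => approx (p a) a.2 := by
  have h1 : Primrec fun x : (ℕ × ℕ) × ℕ =>
      (if x.1.1 % 2 = 0 then x.1.1 / 2 else 0) * x.2 / x.1.2 := by
    have h11 : Primrec fun x : (ℕ × ℕ) × ℕ => x.1.1 := Primrec.fst.comp Primrec.fst
    refine Primrec.nat_div.comp (Primrec.nat_mul.comp (Primrec.ite ?_ ?_ (Primrec.const 0))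
      Primrec.snd) (Primrec.snd.comp Primrec.fst)
    · exact Primrec.eq.comp (Primrec.nat_mod.comp h11 (Primrec.const 2)) (Primrec.const 0)
    · exact Primrec.nat_div.comp h11 (Primrec.const 2)
  refine (h1.to_comp.comp ((computable_rat_pair.comp hp).pair Computable.snd)).of_eq fun a => ?_
  have : ∀ z : ℤ, (if @Encodable.encode ℤ _ z % 2 = 0 then @Encodable.encode ℤ _ z / 2 else 0)
      = z.toNat := by
    rintro (m | m)
    · change (if (2 * m) % 2 = 0 then 2 * m / 2 else 0) = m
      rw [if_pos (by omega)]; omega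
    · change (if (2 * m + 1) % 2 = 0 then (2 * m + 1) / 2 else 0) = 0
      rw [if_neg (by omega)]
  simp only [this, approx]

theorem approx_spec {r : ℝ} (hr : 0 ≤ r) {q : ℚ} {k : ℕ} (hk : 0 < k)
    (h : |r - (q : ℝ)| < 1 / k) : |r * k - approx q k| ≤ 2 := by
  have hk' : (0 : ℝ) < k := by exact_mod_cast hk
  have hd : (0 : ℝ) < q.den := by exact_mod_cast q.den_pos
  have h1 : (q : ℝ) * q.den = q.num := by exact_mod_cast Rat.mul_den_eq_num q
  set t : ℝ := (q.num.toNat : ℝ) / q.den with ht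
  have htq : t = max (q : ℝ) 0 := by
    have h2 : ((q.num.toNat : ℤ) : ℝ) = max (q.num : ℝ) 0 := by
      rw [Int.toNat_eq_max]; push_cast; rfl
    have h3 : (q.num.toNat : ℝ) = max (q.num : ℝ) 0 := by rw [← h2, Int.cast_natCast]
    rw [ht, h3, div_eq_iff hd.ne', ← h1, max_mul_of_nonneg _ _ hd.le, zero_mul]
  have hclose : |r - t| < 1 / k := by
    rw [htq]
    rcases le_total (q : ℝ) 0 with hq | hq
    · rw [max_eq_right hq]
      rw [abs_lt] at h ⊢
      constructor <;> linarith
    · rwa [max_eq_left hq]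
  have hk1 : |r * k - t * k| < 1 := by
    rw [← sub_mul, abs_mul, abs_of_pos hk']
    calc _ < 1 / (k : ℝ) * k := by gcongr
      _ = 1 := by field_simp
  have hfl : (approx q k : ℝ) ≤ t * k ∧ t * k < approx q k + 1 := by
    have e : t * k = ((q.num.toNat * k : ℕ) : ℝ) / q.den := by rw [ht]; push_cast; ring
    rw [e]
    refine ⟨Nat.cast_div_le, ?_⟩
    rw [div_lt_iff₀ hd]
    have := Nat.lt_mul_div_succ (q.num.toNat * k) q.den_pos
    have h4 : q.num.toNat * k < (approx q k + 1) * q.den := by rw [mul_comm (_ + 1)]; exact this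
    exact_mod_cast h4
  rw [abs_lt] at hk1
  rw [abs_le]
  constructor <;> linarith [hfl.1, hfl.2]

/-! ### Cylinders and the prefix order -/

theorem prefixSeq_mono {a b : S} (h : a <+: b) {ω : Seq} (hb : PrefixSeq b ω) :
    PrefixSeq a ω := by
  intro i
  rw [← hb ⟨i, i.2.trans_le h.length_le⟩]
  simpa using h.getElem i.2

theorem prefix_of_prefixSeq {a b : S} {ω : Seq} (ha : PrefixSeq a ω) (hb : PrefixSeq b ω)
    (hl : a.length ≤ b.length) : a <+: b := by
  rw [List.prefix_iff_eq_take]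
  refine List.ext_getElem (by simp [hl]) fun i h1 h2 => ?_
  rw [List.getElem_take]
  exact (ha ⟨i, h1⟩).trans (hb ⟨i, h1.trans_le hl⟩).symm

theorem prefixSeq_total {a b : S} {ω : Seq} (ha : PrefixSeq a ω) (hb : PrefixSeq b ω) :
    a <+: b ∨ b <+: a :=
  (le_total a.length b.length).imp (prefix_of_prefixSeq ha hb) (prefix_of_prefixSeq hb ha)

theorem cyl_nonempty (x : S) : (cyl x).Nonempty :=
  ⟨fun i => x.getD i false, fun i => by simp⟩

theorem cyl2_nonempty (x : S × S) : (cyl2 x).Nonempty :=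
  (cyl_nonempty x.1).prod (cyl_nonempty x.2)

theorem cyl2_anti {a b : S × S} (h : Pre2 a b) : cyl2 b ⊆ cyl2 a :=
  Set.prod_mono (fun _ => prefixSeq_mono h.1) (fun _ => prefixSeq_mono h.2)

theorem measurableSet_cyl (x : S) : MeasurableSet (cyl x) := by
  have : cyl x = ⋂ i : Fin x.length, (fun ω : Seq => ω i) ⁻¹' {x.get i} := by
    ext ω
    simp [cyl, PrefixSeq, eq_comm]
  rw [this]
  exact MeasurableSet.iInter fun i => measurable_pi_apply _ (measurableSet_singleton _)

theorem measurableSet_cyl2 (x : S × S) : MeasurableSet (cyl2 x) :=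
  (measurableSet_cyl _).prod (measurableSet_cyl _)

theorem Pre2.refl (a : S × S) : Pre2 a a := ⟨List.prefix_rfl, List.prefix_rfl⟩

theorem Pre2.trans {a b c : S × S} (h : Pre2 a b) (h' : Pre2 b c) : Pre2 a c :=
  ⟨h.1.trans h'.1, h.2.trans h'.2⟩

theorem natPair_mono {a b c d : ℕ} (h : a ≤ b) (h' : c ≤ d) : Nat.pair a c ≤ Nat.pair b d := by
  rcases h.eq_or_lt with rfl | h <;> rcases h'.eq_or_lt with rfl | h'
  · exact le_rfl
  · exact (Nat.pair_lt_pair_right _ h').le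
  · exact (Nat.pair_lt_pair_left _ h).le
  · exact ((Nat.pair_lt_pair_left _ h).trans (Nat.pair_lt_pair_right _ h')).le

open Encodable in
theorem encode_le_of_prefix {a b : S} (h : a <+: b) : encode a ≤ encode b := by
  induction a generalizing b with
  | nil => simp
  | cons x a ih =>
    obtain ⟨t, rfl⟩ := h
    rw [List.cons_append, encode_list_cons, encode_list_cons]
    exact Nat.succ_le_succ (natPair_mono le_rfl (ih (List.prefix_append _ _)))

open Encodable in
/-- The standard coding of pairs of strings lists every string pair after all its prefixes. -/
theorem encode_le_of_pre2 {a b : S × S} (h : Pre2 a b) : encode a ≤ encode b := by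
  rw [encode_prod_val, encode_prod_val]
  exact natPair_mono (encode_le_of_prefix h.1) (encode_le_of_prefix h.2)

theorem Cond4.comparable {A : Set (S × S)} (h4 : Cond4 A) {a b y : S × S} (ha : a ∈ A) (hb : b ∈ A)
    (hay : Pre2 a y) (hby : Pre2 b y) : Pre2 a b ∨ Pre2 b a := by
  rcases h4 a ha b hb with h | h | h
  · exact Or.inl h
  · exact Or.inr h
  · obtain ⟨ω, hω⟩ := cyl2_nonempty y
    have : ω ∈ cyl2 a ∩ cyl2 b := ⟨cyl2_anti hay hω, cyl2_anti hby hω⟩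
    rw [h] at this
    exact this.elim

/-! ### Arithmetic-coding intervals -/

open Encodable in
/-- `Before A y z`: the pair `z ∈ A` branches off to the left of `y`, that is, `z` has a smaller
code than `y`, is not a prefix of `y`, and no element of `A` with a smaller code than `z` is a
prefix of exactly one of `y` and `z`. The cylinders of these `z` partition the region coded to the
left of `y`. -/
def Before (A : Set (S × S)) (y z : S × S) : Prop :=
  z ∈ A ∧ encode z < encode y ∧ ¬ Pre2 z y ∧
    ∀ w ∈ A, encode w < encode z → (Pre2 w y ↔ Pre2 w z)

open Encodable in
theorem finite_before (A : Set (S × S)) (y : S × S) : {z | Before A y z}.Finite :=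
  Set.Finite.subset (Set.Finite.preimage encode_injective.injOn (Set.finite_Iio (encode y)))
    fun _ hz => hz.2.1

theorem inter_of_not_pre2 {A : Set (S × S)} (h4 : Cond4 A) {a b : S × S} (ha : a ∈ A) (hb : b ∈ A)
    (h1 : ¬ Pre2 a b) (h2 : ¬ Pre2 b a) : Disjoint (cyl2 a) (cyl2 b) := by
  rcases h4 a ha b hb with h | h | h
  · exact (h1 h).elim
  · exact (h2 h).elim
  · exact Set.disjoint_iff_inter_eq_empty.2 h

theorem not_pre2_of_lt {a b : S × S} (h : Encodable.encode a < Encodable.encode b) :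
    ¬ Pre2 b a :=
  fun h' => absurd (encode_le_of_pre2 h') (not_le.2 h)

theorem before_disjoint {A : Set (S × S)} (h4 : Cond4 A) {y z : S × S} (hy : y ∈ A)
    (hz : Before A y z) : Disjoint (cyl2 z) (cyl2 y) :=
  inter_of_not_pre2 h4 hz.1 hy hz.2.2.1 (not_pre2_of_lt hz.2.1)

theorem before_pairwise {A : Set (S × S)} (h4 : Cond4 A) (y : S × S) :
    {z | Before A y z}.PairwiseDisjoint cyl2 := by
  have key : ∀ z z', Before A y z → Before A y z' → Encodable.encode z < Encodable.encode z' →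
      Disjoint (cyl2 z) (cyl2 z') := fun z z' hz hz' hlt =>
    inter_of_not_pre2 h4 hz.1 hz'.1 (fun h => hz.2.2.1 ((hz'.2.2.2 z hz.1 hlt).2 h))
      (not_pre2_of_lt hlt)
  intro z hz z' hz' hne
  rcases lt_trichotomy (Encodable.encode z) (Encodable.encode z') with h | h | h
  · exact key z z' hz hz' h
  · exact (hne (Encodable.encode_injective h)).elim
  · exact (key z' z hz' hz h).symm

/-- The region of `Ω²` coded to the left of `y`. -/
def leftRegion (A : Set (S × S)) (y : S × S) : Set (Seq × Seq) := ⋃ z ∈ {z | Before A y z}, cyl2 z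

theorem measurableSet_leftRegion (A : Set (S × S)) (y : S × S) : MeasurableSet (leftRegion A y) :=
  (finite_before A y).measurableSet_biUnion fun _ _ => measurableSet_cyl2 _

theorem leftRegion_disjoint {A : Set (S × S)} (h4 : Cond4 A) {y : S × S} (hy : y ∈ A) :
    Disjoint (leftRegion A y) (cyl2 y) :=
  Set.disjoint_iUnion₂_left.2 fun _ hz => before_disjoint h4 hy hz

/-- If the element `w` of `A` of least code that is a prefix of exactly one of `y` and `y'` is a
prefix of `y'`, then `y'` is coded to the left of `y`. -/
theorem leftRegion_aux {A : Set (S × S)} (h4 : Cond4 A) {y y' w : S × S} (hy : y ∈ A)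
    (hyy' : ¬ Pre2 y y') (hw : w ∈ A) (hwy' : Pre2 w y') (hwy : ¬ Pre2 w y)
    (hmin : ∀ v ∈ A, Encodable.encode v < Encodable.encode w → (Pre2 v y ↔ Pre2 v y')) :
    leftRegion A y' ∪ cyl2 y' ⊆ leftRegion A y := by
  have hlt : Encodable.encode w < Encodable.encode y := by
    rcases lt_trichotomy (Encodable.encode w) (Encodable.encode y) with h | h | h
    · exact h
    · exact (hyy' (Encodable.encode_injective h ▸ hwy')).elim
    · exact (hyy' ((hmin y hy h).1 (Pre2.refl y))).elim
  have hB : Before A y w := by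
    refine ⟨hw, hlt, hwy, fun v hv hvw => ?_⟩
    rw [hmin v hv hvw]
    refine ⟨fun h => ?_, fun h => h.trans hwy'⟩
    exact (h4.comparable hv hw h hwy').resolve_right (not_pre2_of_lt hvw)
  have hsub : ∀ z, Before A y z → cyl2 z ⊆ leftRegion A y := fun z hz =>
    Set.subset_iUnion₂ (s := fun z (_ : z ∈ {z | Before A y z}) => cyl2 z) z hz
  refine Set.union_subset (Set.iUnion₂_subset fun z hz => ?_)
    ((cyl2_anti hwy').trans (hsub w hB))
  rcases lt_trichotomy (Encodable.encode w) (Encodable.encode z) with h | h | h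
  · exact (cyl2_anti ((hz.2.2.2 w hw h).1 hwy')).trans (hsub w hB)
  · exact (hz.2.2.1 (Encodable.encode_injective h ▸ hwy')).elim
  · refine hsub z ⟨hz.1, h.trans hlt, fun hzy => hz.2.2.1 ((hmin z hz.1 h).1 hzy),
      fun v hv hvz => ?_⟩
    rw [hmin v hv (hvz.trans h), hz.2.2.2 v hv hvz]

theorem leftRegion_total {A : Set (S × S)} (h4 : Cond4 A) {y y' : S × S} (hy : y ∈ A)
    (hy' : y' ∈ A) (h : ¬ Pre2 y y') (h' : ¬ Pre2 y' y) :
    leftRegion A y' ∪ cyl2 y' ⊆ leftRegion A y ∨ leftRegion A y ∪ cyl2 y ⊆ leftRegion A y' := by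
  classical
  have hex : ∃ n, ∃ w ∈ A, Encodable.encode w = n ∧ ¬ (Pre2 w y ↔ Pre2 w y') :=
    ⟨_, y, hy, rfl, fun e => h (e.1 (Pre2.refl y))⟩
  obtain ⟨w, hw, hwn, hne⟩ := Nat.find_spec hex
  have hmin : ∀ v ∈ A, Encodable.encode v < Encodable.encode w → (Pre2 v y ↔ Pre2 v y') := by
    intro v hv hlt
    by_contra hc
    rw [hwn] at hlt
    exact Nat.find_min hex hlt ⟨v, hv, rfl, hc⟩
  by_cases hwy : Pre2 w y
  · have hwy' : ¬ Pre2 w y' := fun e => hne ⟨fun _ => e, fun _ => hwy⟩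
    exact Or.inr (leftRegion_aux h4 hy' h' hw hwy hwy' fun v hv hl => (hmin v hv hl).symm)
  · have hwy' : Pre2 w y' := by
      by_contra e
      exact hne ⟨fun a => (hwy a).elim, fun a => (e a).elim⟩
    exact Or.inl (leftRegion_aux h4 hy h hw hwy' hwy hmin)

/-- The left end point of the interval of length `P(y)` assigned to `y`. -/
noncomputable def leftEnd (P : Measure (Seq × Seq)) (A : Set (S × S)) (y : S × S) : ℝ :=
  P.real (leftRegion A y)

theorem leftEnd_add {P : Measure (Seq × Seq)} [IsProbabilityMeasure P] {A : Set (S × S)}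
    (h4 : Cond4 A) {y : S × S} (hy : y ∈ A) :
    leftEnd P A y + P.real (cyl2 y) = P.real (leftRegion A y ∪ cyl2 y) :=
  (measureReal_union (leftRegion_disjoint h4 hy) (measurableSet_cyl2 y)).symm

theorem leftEnd_add_le_one {P : Measure (Seq × Seq)} [IsProbabilityMeasure P] {A : Set (S × S)}
    (h4 : Cond4 A) {y : S × S} (hy : y ∈ A) : leftEnd P A y + P.real (cyl2 y) ≤ 1 := by
  rw [leftEnd_add h4 hy]
  exact measureReal_le_one

/-- Incomparable elements of `A` get intervals without common interior points. -/
theorem leftEnd_total {P : Measure (Seq × Seq)} [IsProbabilityMeasure P] {A : Set (S × S)}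
    (h4 : Cond4 A) {y y' : S × S} (hy : y ∈ A) (hy' : y' ∈ A) (h : ¬ Pre2 y y')
    (h' : ¬ Pre2 y' y) :
    leftEnd P A y' + P.real (cyl2 y') ≤ leftEnd P A y ∨
      leftEnd P A y + P.real (cyl2 y) ≤ leftEnd P A y' := by
  rw [leftEnd_add h4 hy, leftEnd_add h4 hy']
  exact (leftRegion_total h4 hy hy' h h').imp (fun e => measureReal_mono e)
    fun e => measureReal_mono e

/-- The list `B` is duplicate-free and consists of the `z` with `Before A y z`; the left end point
is thus a finite sum of computable reals. -/
theorem leftEnd_eq_sum {P : Measure (Seq × Seq)} [IsProbabilityMeasure P] {A : Set (S × S)}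
    (h4 : Cond4 A) (y : S × S) (B : List (S × S)) (hB : B.Nodup)
    (hmem : ∀ z, z ∈ B ↔ Before A y z) :
    leftEnd P A y = (B.map fun z => P.real (cyl2 z)).sum := by
  classical
  have e : leftRegion A y = ⋃ z ∈ B.toFinset, cyl2 z := by
    simp [leftRegion, hmem]
  rw [leftEnd, e, measureReal_biUnion_finset _ fun z _ => measurableSet_cyl2 z,
    List.sum_toFinset _ hB]
  intro z hz z' hz' hne
  exact before_pairwise h4 y ((hmem z).1 (by simpa using hz)) ((hmem z').1 (by simpa using hz')) hne

/-! ### Suprema of chains in `(S ∪ Ω)²` -/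

theorem exists_sup1 (C : Set S) (hne : C.Nonempty) (hC : ∀ a ∈ C, ∀ b ∈ C, a <+: b ∨ b <+: a) :
    ∃ s, IsSupRel SW.le (emb1 '' C) s := by
  classical
  have hle : ∀ a ∈ C, ∀ b ∈ C, a.length ≤ b.length → a <+: b := by
    intro a ha b hb hl
    rcases hC a ha b hb with h | h
    · exact h
    · rw [h.eq_of_length (le_antisymm h.length_le hl)]
  by_cases hbd : ∃ m ∈ C, ∀ a ∈ C, a.length ≤ m.length
  · obtain ⟨m, hm, hmax⟩ := hbd
    refine ⟨.fin m, ?_, fun b hb => hb _ ⟨m, hm, rfl⟩⟩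
    rintro _ ⟨a, ha, rfl⟩
    exact hle a ha m hm (hmax a ha)
  · push Not at hbd
    have hlong : ∀ n : ℕ, ∃ a ∈ C, n < a.length := by
      intro n
      induction n with
      | zero =>
        obtain ⟨m, hm⟩ := hne
        obtain ⟨a, ha, h⟩ := hbd m hm
        exact ⟨a, ha, by omega⟩
      | succ n ih =>
        obtain ⟨m, hm, hn⟩ := ih
        obtain ⟨a, ha, h⟩ := hbd m hm
        exact ⟨a, ha, by omega⟩
    choose a haC hal using hlong
    refine ⟨.inf fun n => (a n)[n]'(hal n), ?_, fun b hb => ?_⟩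
    · rintro _ ⟨x, hx, rfl⟩ i
      change x[(i : ℕ)] = (a i)[(i : ℕ)]'(hal i)
      rcases hC x hx (a i) (haC i) with h | h
      · exact h.getElem i.2
      · exact (h.getElem (hal i)).symm
    · rcases b with y | ω
      · have := (hb _ ⟨a y.length, haC _, rfl⟩ : a y.length <+: y).length_le
        exact absurd (hal y.length) (by omega)
      · refine funext fun n => ?_
        exact (hb _ ⟨a n, haC n, rfl⟩ : PrefixSeq (a n) ω) ⟨n, hal n⟩

theorem exists_sup2 (C : Set (S × S)) (hne : C.Nonempty)
    (hC : ∀ a ∈ C, ∀ b ∈ C, Pre2 a b ∨ Pre2 b a) : ∃ s, IsSupRel SW2.le (emb2 '' C) s := by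
  obtain ⟨s, hs, hs'⟩ := exists_sup1 (Prod.fst '' C) (hne.image _) (by
    rintro _ ⟨a, ha, rfl⟩ _ ⟨b, hb, rfl⟩
    exact (hC a ha b hb).imp And.left And.left)
  obtain ⟨t, ht, ht'⟩ := exists_sup1 (Prod.snd '' C) (hne.image _) (by
    rintro _ ⟨a, ha, rfl⟩ _ ⟨b, hb, rfl⟩
    exact (hC a ha b hb).imp And.right And.right)
  refine ⟨(s, t), ?_, fun b hb => ⟨hs' _ ?_, ht' _ ?_⟩⟩
  · rintro _ ⟨a, ha, rfl⟩
    exact ⟨hs _ ⟨_, ⟨a, ha, rfl⟩, rfl⟩, ht _ ⟨_, ⟨a, ha, rfl⟩, rfl⟩⟩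
  · rintro _ ⟨_, ⟨a, ha, rfl⟩, rfl⟩
    exact (hb _ ⟨a, ha, rfl⟩).1
  · rintro _ ⟨_, ⟨a, ha, rfl⟩, rfl⟩
    exact (hb _ ⟨a, ha, rfl⟩).2

theorem le_total_of_le {a b : S} {q : SW} (ha : SW.le (emb1 a) q) (hb : SW.le (emb1 b) q) :
    a <+: b ∨ b <+: a := by
  rcases q with y | ω
  · exact List.prefix_or_prefix_of_prefix ha hb
  · exact prefixSeq_total ha hb

/-! ### Dyadic intervals -/

/-- The number whose binary expansion is `p`; `p` stands for the interval
`[binVal p / 2 ^ |p|, (binVal p + 1) / 2 ^ |p|]`. -/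
def binVal (p : S) : ℕ := p.foldl (fun a b => 2 * a + cond b 1 0) 0

/-- `2 ^ |p|`, as a fold so that it is visibly primitive recursive. -/
def binPow (p : S) : ℕ := p.foldl (fun a _ => 2 * a) 1

theorem binVal_concat (p : S) (b : Bool) : binVal (p ++ [b]) = 2 * binVal p + cond b 1 0 := by
  simp [binVal]

theorem binPow_eq (p : S) : binPow p = 2 ^ p.length := by
  induction p using List.reverseRecOn with
  | nil => rfl
  | append_singleton p b ih =>
    have : binPow (p ++ [b]) = 2 * binPow p := by simp [binPow]
    rw [this, ih, List.length_append, List.length_singleton, pow_succ, mul_comm]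

theorem primrec_binVal : Primrec binVal := by
  refine Primrec.list_foldl (α := S) (β := Bool) (σ := ℕ) (f := id) (g := fun _ => 0)
    (h := fun _ a => 2 * a.1 + cond a.2 1 0) Primrec.id (Primrec.const 0) ?_
  exact Primrec.nat_add.comp (Primrec.nat_double.comp (Primrec.fst.comp Primrec.snd))
    (Primrec.cond (Primrec.snd.comp Primrec.snd) (Primrec.const 1) (Primrec.const 0))

theorem primrec_binPow : Primrec binPow := by
  refine Primrec.list_foldl (α := S) (β := Bool) (σ := ℕ) (f := id) (g := fun _ => 1)
    (h := fun _ a => 2 * a.1) Primrec.id (Primrec.const 1) ?_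
  exact Primrec.nat_double.comp (Primrec.fst.comp Primrec.snd)

theorem exists_binVal (n j : ℕ) (hj : j < 2 ^ n) : ∃ p : S, p.length = n ∧ binVal p = j := by
  induction n generalizing j with
  | zero => exact ⟨[], rfl, by simp at hj; simp [binVal, hj]⟩
  | succ n ih =>
    obtain ⟨p, hp, hpj⟩ := ih (j / 2) (by rw [pow_succ] at hj; omega)
    refine ⟨p ++ [decide (j % 2 = 1)], by simp [hp], ?_⟩
    rw [binVal_concat, hpj]
    rcases Nat.mod_two_eq_zero_or_one j with h | h <;> simp [h] <;> omega

/-- The left end point of the dyadic interval of `p`. -/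
noncomputable def lo (p : S) : ℝ := binVal p / 2 ^ p.length

/-- The right end point of the dyadic interval of `p`. -/
noncomputable def hi (p : S) : ℝ := (binVal p + 1) / 2 ^ p.length

theorem lo_lt_hi (p : S) : lo p < hi p := by
  unfold lo hi
  gcongr
  linarith

theorem lo_hi_mono {p p' : S} (h : p <+: p') : lo p ≤ lo p' ∧ hi p' ≤ hi p := by
  obtain ⟨t, rfl⟩ := h
  induction t using List.reverseRecOn with
  | nil => simp
  | append_singleton t b ih =>
    rw [← List.append_assoc]
    have hpos : (0 : ℝ) < 2 ^ (p ++ t).length := by positivity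
    have h1 : lo (p ++ t ++ [b]) = (binVal (p ++ t) + (cond b 1 0 : ℕ) / 2) / 2 ^ (p ++ t).length := by
      rw [lo, binVal_concat, List.length_append (bs := [b]), List.length_singleton, pow_succ]
      push_cast
      field_simp
    have h2 : hi (p ++ t ++ [b]) =
        (binVal (p ++ t) + ((cond b 1 0 : ℕ) + 1) / 2) / 2 ^ (p ++ t).length := by
      rw [hi, binVal_concat, List.length_append (bs := [b]), List.length_singleton, pow_succ]
      push_cast
      field_simp
      ring
    refine ⟨ih.1.trans ?_, le_trans ?_ ih.2⟩
    · rw [h1, lo]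
      gcongr
      cases b <;> simp
    · rw [h2, hi]
      gcongr
      cases b <;> norm_num

/-! ### Semi-decidability of interval inclusion -/

section Certificates

variable (A : Set (S × S)) (M : (S × S) × ℕ → ℕ)

open Encodable

open Classical in
/-- The element of `A` with code `n`, if there is one. -/
noncomputable def elt (n : ℕ) : Option (S × S) :=
  (decode₂ (S × S) n).bind fun z => if z ∈ A then some z else none

/-- The elements of `A` with code below `n`. -/
noncomputable def enumA (n : ℕ) : List (S × S) := (List.range n).filterMap (elt A)

theorem elt_eq_some {n : ℕ} {z : S × S} : elt A n = some z ↔ z ∈ A ∧ encode z = n := by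
  classical
  rw [elt, Option.bind_eq_some_iff]
  constructor
  · rintro ⟨w, hw, h⟩
    split_ifs at h with hA
    · obtain rfl : w = z := Option.some.inj h
      exact ⟨hA, mem_decode₂.1 hw⟩
  · rintro ⟨hA, h⟩
    exact ⟨z, mem_decode₂.2 h, if_pos hA⟩

theorem mem_enumA {n : ℕ} {z : S × S} : z ∈ enumA A n ↔ z ∈ A ∧ encode z < n := by
  simp only [enumA, List.mem_filterMap, List.mem_range, elt_eq_some]
  constructor
  · rintro ⟨m, hm, hA, rfl⟩
    exact ⟨hA, hm⟩
  · rintro ⟨hA, h⟩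
    exact ⟨_, h, hA, rfl⟩

theorem nodup_enumA (n : ℕ) : (enumA A n).Nodup := by
  refine List.Nodup.filterMap (fun a b z ha hb => ?_) List.nodup_range
  rw [Option.mem_def, elt_eq_some] at ha hb
  exact ha.2.symm.trans hb.2

/-- The elements of `A` with code below `n`, paired with the approximations `M (z, k)` of `k` times
their probabilities. -/
noncomputable def table (n k : ℕ) : List ((S × S) × ℕ) := (enumA A n).map fun z => (z, M (z, k))

/-- `Before`, with the quantifier over `A` bounded by a finite table. -/
def BeforeT (y : S × S) (T : List ((S × S) × ℕ)) (z : S × S) : Prop :=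
  ¬ Pre2 z y ∧ ∀ w ∈ T, encode w.1 < encode z → (Pre2 w.1 y ↔ Pre2 w.1 z)

theorem beforeT_iff (y z : S × S) (k : ℕ) :
    (z ∈ enumA A (encode y) ∧ BeforeT y (table A M (encode y) k) z) ↔ Before A y z := by
  simp only [mem_enumA, BeforeT, table, List.mem_map, forall_exists_index, and_imp, Before]
  constructor
  · rintro ⟨⟨hA, hlt⟩, hn, h⟩
    exact ⟨hA, hlt, hn, fun w hw hl => h _ w hw (hl.trans hlt) rfl hl⟩
  · rintro ⟨hA, hlt, hn, h⟩
    refine ⟨⟨hA, hlt⟩, hn, ?_⟩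
    rintro _ w hw - rfl hl
    exact h w hw hl

open Classical in
/-- The elements to the left of `y`. -/
noncomputable def leftList (y : S × S) : List (S × S) := (enumA A (encode y)).filter (Before A y ·)

open Classical in
/-- The elements to the left of `y`, paired with the `k`-th approximations of `k` times their
probabilities. -/
noncomputable def leftTable (y : S × S) (k : ℕ) : List ((S × S) × ℕ) :=
  (table A M (encode y) k).filter (fun z => BeforeT y (table A M (encode y) k) z.1)

theorem leftTable_eq (y : S × S) (k : ℕ) :
    leftTable A M y k = (leftList A y).map fun z => (z, M (z, k)) := by
  classical
  unfold leftTable leftList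
  conv_lhs => enter [2]; rw [table]
  rw [List.filter_map]
  congr 1
  refine List.filter_congr fun z hz => ?_
  simp only [Function.comp, decide_eq_decide]
  rw [← beforeT_iff A M y z k]
  simp [hz]

theorem mem_leftList (y z : S × S) : z ∈ leftList A y ↔ Before A y z := by
  simp only [leftList, List.mem_filter, mem_enumA, decide_eq_true_eq, and_iff_right_iff_imp]
  exact fun h => ⟨h.1, h.2.1⟩

theorem nodup_leftList (y : S × S) : (leftList A y).Nodup := (nodup_enumA A _).filter _

/-- The total of the approximations in a table. -/
def sumSnd (l : List ((S × S) × ℕ)) : ℕ := l.foldr (fun a s => a.2 + s) 0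

/-- With `N` intervals to the left of `y`, the total of the `k`-th approximations is within `2 N`
of `k * leftEnd`; the two inequalities thus place the dyadic interval of `p` inside that of `y`. -/
def Cert (p : S) (y : S × S) (k : ℕ) : Prop :=
  0 < k ∧
  (sumSnd (leftTable A M y k) + 2 * (leftTable A M y k).length) * binPow p ≤ binVal p * k ∧
  (binVal p + 1) * k + (2 * (leftTable A M y k).length + 2) * binPow p ≤
    (sumSnd (leftTable A M y k) + M (y, k)) * binPow p

theorem computable_elt (hA : ComputablePred (· ∈ A)) : Computable (elt A) := by
  classical
  refine Computable.option_bind Primrec.decode₂.to_comp ?_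
  have := (hA.decide.comp (Computable.snd (α := ℕ) (β := S × S))).cond
    (Computable.option_some.comp Computable.snd) (Computable.const none)
  exact this.of_eq fun a => by by_cases h : a.2 ∈ A <;> simp [h]

theorem table_succ (n k : ℕ) : table A M (n + 1) k =
    table A M n k ++ ((elt A n).map fun z => (z, M (z, k))).toList := by
  rw [table, enumA, List.range_succ, List.filterMap_append, List.map_append, table, enumA]
  congr 1
  cases h : elt A n <;> simp [h]

theorem computable_table (hA : ComputablePred (· ∈ A)) (hM : Computable M) :
    Computable fun a : ℕ × ℕ => table A M a.1 a.2 := by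
  have h : Computable fun a : ℕ × ℕ => (Nat.rec (motive := fun _ => List ((S × S) × ℕ)) []
      (fun n T => T ++ ((elt A n).map fun z => (z, M (z, a.2))).toList) a.1) := by
    refine Computable.nat_rec (h := fun (a : ℕ × ℕ) (b : ℕ × List ((S × S) × ℕ)) =>
      b.2 ++ ((elt A b.1).map fun z => (z, M (z, a.2))).toList)
      Computable.fst (Computable.const []) ?_
    refine Computable.list_append.comp (Computable.snd.comp Computable.snd)
      (Primrec.optionToList.to_comp.comp (Computable.option_map
        ((computable_elt A hA).comp (Computable.fst.comp Computable.snd)) ?_))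
    exact Computable.snd.pair (hM.comp (Computable.snd.pair
      (Computable.snd.comp (Computable.fst.comp Computable.fst))))
  refine h.of_eq fun a => ?_
  obtain ⟨n, k⟩ := a
  induction n with
  | zero => rfl
  | succ n ih => rw [table_succ, ← ih]

theorem primrecRel_prefix : PrimrecRel fun a b : S => a <+: b := by
  refine PrimrecPred.of_eq (Primrec.eq.comp Primrec.fst (Primrec.list_take.comp
    (Primrec.list_length.comp Primrec.fst) Primrec.snd)) fun a => ?_
  exact List.prefix_iff_eq_take.symm

theorem primrecRel_pre2 : PrimrecRel Pre2 :=
  (primrecRel_prefix.comp (Primrec.fst.comp Primrec.fst) (Primrec.fst.comp Primrec.snd)).and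
    (primrecRel_prefix.comp (Primrec.snd.comp Primrec.fst) (Primrec.snd.comp Primrec.snd))

theorem primrecRel_agree : PrimrecRel fun (w : (S × S) × ℕ) (b : (S × S) × (S × S)) =>
    encode w.1 < encode b.2 → (Pre2 w.1 b.1 ↔ Pre2 w.1 b.2) := by
  have h1 : Primrec fun a : ((S × S) × ℕ) × ((S × S) × (S × S)) => a.1.1 :=
    Primrec.fst.comp Primrec.fst
  have h2 : Primrec fun a : ((S × S) × ℕ) × ((S × S) × (S × S)) => a.2.1 :=
    Primrec.fst.comp Primrec.snd
  have h3 : Primrec fun a : ((S × S) × ℕ) × ((S × S) × (S × S)) => a.2.2 :=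
    Primrec.snd.comp Primrec.snd
  have h12 : PrimrecPred fun a : ((S × S) × ℕ) × ((S × S) × (S × S)) => Pre2 a.1.1 a.2.1 :=
    primrecRel_pre2.comp h1 h2
  have h13 : PrimrecPred fun a : ((S × S) × ℕ) × ((S × S) × (S × S)) => Pre2 a.1.1 a.2.2 :=
    primrecRel_pre2.comp h1 h3
  have hlt : PrimrecPred fun a : ((S × S) × ℕ) × ((S × S) × (S × S)) =>
      encode a.1.1 < encode a.2.2 :=
    Primrec.nat_lt.comp (Primrec.encode.comp h1) (Primrec.encode.comp h3)
  exact (hlt.not.or ((h12.and h13).or (h12.not.and h13.not))).of_eq fun a => by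
    rw [← iff_iff_and_or_not_and_not, ← imp_iff_not_or]

theorem primrecPred_beforeT : PrimrecPred fun a : ((S × S) × ℕ) × ((S × S) × List ((S × S) × ℕ)) =>
    BeforeT a.2.1 a.2.2 a.1.1 := by
  have hz : Primrec fun a : ((S × S) × ℕ) × ((S × S) × List ((S × S) × ℕ)) => a.1.1 :=
    Primrec.fst.comp Primrec.fst
  have hy : Primrec fun a : ((S × S) × ℕ) × ((S × S) × List ((S × S) × ℕ)) => a.2.1 :=
    Primrec.fst.comp Primrec.snd
  have hT : Primrec fun a : ((S × S) × ℕ) × ((S × S) × List ((S × S) × ℕ)) => a.2.2 :=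
    Primrec.snd.comp Primrec.snd
  have hall : PrimrecPred fun a : ((S × S) × ℕ) × ((S × S) × List ((S × S) × ℕ)) =>
      ∀ w ∈ a.2.2, encode w.1 < encode a.1.1 → (Pre2 w.1 a.2.1 ↔ Pre2 w.1 a.1.1) :=
    primrecRel_agree.forall_mem_list.comp hT (hy.pair hz)
  have hn : PrimrecPred fun a : ((S × S) × ℕ) × ((S × S) × List ((S × S) × ℕ)) =>
      ¬ Pre2 a.1.1 a.2.1 := (primrecRel_pre2.comp hz hy).not
  exact hn.and hall

open Classical in
theorem computable_filter_beforeT {T : (S × S) × ℕ → List ((S × S) × ℕ)} (hT : Computable T) :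
    Computable fun a => (T a).filter fun z => BeforeT a.1 (T a) z.1 := by
  have hB : PrimrecRel fun (z : (S × S) × ℕ) (b : (S × S) × List ((S × S) × ℕ)) =>
      BeforeT b.1 b.2 z.1 := primrecPred_beforeT
  exact (hB.listFilter.to_comp.comp hT (Computable.fst.pair hT)).of_eq fun a => List.filter_congr fun z _ => decide_eq_decide.2 Iff.rfl

theorem computable_leftTable (hA : ComputablePred (· ∈ A)) (hM : Computable M) :
    Computable fun a : (S × S) × ℕ => leftTable A M a.1 a.2 := by
  have he : Computable fun a : (S × S) × ℕ => (encode a.1, a.2) :=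
    (Computable.encode.comp Computable.fst).pair Computable.snd
  have hT := (computable_table A M hA hM).comp he
  have := computable_filter_beforeT hT
  exact this

theorem computablePred_cert (hA : ComputablePred (· ∈ A)) (hM : Computable M) :
    ComputablePred fun a : (S × (S × S)) × ℕ => Cert A M a.1.1 a.1.2 a.2 := by
  classical
  have hsum : Primrec sumSnd := by
    refine Primrec.list_foldr (α := List ((S × S) × ℕ)) (β := (S × S) × ℕ) (σ := ℕ) (f := id)
      (g := fun _ => 0) (h := fun _ a => a.1.2 + a.2) Primrec.id (Primrec.const 0) ?_
    exact Primrec.nat_add.comp (Primrec.snd.comp (Primrec.fst.comp Primrec.snd))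
      (Primrec.snd.comp Primrec.snd)
  -- the test is primitive recursive in `p`, `k`, the table and the approximation for `y`
  have hR : PrimrecPred fun a : (S × ℕ) × (List ((S × S) × ℕ) × ℕ) => 0 < a.1.2 ∧
      (sumSnd a.2.1 + 2 * a.2.1.length) * binPow a.1.1 ≤ binVal a.1.1 * a.1.2 ∧
      (binVal a.1.1 + 1) * a.1.2 + (2 * a.2.1.length + 2) * binPow a.1.1 ≤
        (sumSnd a.2.1 + a.2.2) * binPow a.1.1 := by
    have hp : Primrec fun a : (S × ℕ) × (List ((S × S) × ℕ) × ℕ) => a.1.1 :=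
      Primrec.fst.comp Primrec.fst
    have hk : Primrec fun a : (S × ℕ) × (List ((S × S) × ℕ) × ℕ) => a.1.2 :=
      Primrec.snd.comp Primrec.fst
    have hT : Primrec fun a : (S × ℕ) × (List ((S × S) × ℕ) × ℕ) => a.2.1 :=
      Primrec.fst.comp Primrec.snd
    have hm : Primrec fun a : (S × ℕ) × (List ((S × S) × ℕ) × ℕ) => a.2.2 :=
      Primrec.snd.comp Primrec.snd
    have hv := primrec_binVal.comp hp
    have hw := primrec_binPow.comp hp
    have hs := hsum.comp hT
    have hl := Primrec.nat_mul.comp (Primrec.const 2) (Primrec.list_length.comp hT)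
    refine (Primrec.nat_lt.comp (Primrec.const 0) hk).and (PrimrecPred.and ?_ ?_)
    · exact Primrec.nat_le.comp (Primrec.nat_mul.comp (Primrec.nat_add.comp hs hl) hw)
        (Primrec.nat_mul.comp hv hk)
    · exact Primrec.nat_le.comp (Primrec.nat_add.comp
        (Primrec.nat_mul.comp (Primrec.succ.comp hv) hk)
        (Primrec.nat_mul.comp (Primrec.nat_add.comp hl (Primrec.const 2)) hw))
        (Primrec.nat_mul.comp (Primrec.nat_add.comp hs hm) hw)
  have hyk : Computable fun a : (S × (S × S)) × ℕ => (a.1.2, a.2) :=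
    (Computable.snd.comp Computable.fst).pair Computable.snd
  have := hR.decide.to_comp.comp (((Computable.fst.comp Computable.fst).pair Computable.snd).pair
    (((computable_leftTable A M hA hM).comp hyk).pair (hM.comp hyk)))
  exact Computable.computablePred (this.of_eq fun a => decide_eq_decide.2 Iff.rfl)

variable {A M}

/-- Each of the summands of `leftEnd` contributes an error of at most `2`. -/
theorem abs_leftEnd_sub {P : Measure (Seq × Seq)} [IsProbabilityMeasure P] (h4 : Cond4 A)
    {k : ℕ} (hM : ∀ z, |P.real (cyl2 z) * k - M (z, k)| ≤ 2) (y : S × S) :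
    |leftEnd P A y * k - sumSnd (leftTable A M y k)| ≤ 2 * (leftList A y).length := by
  rw [leftEnd_eq_sum h4 y _ (nodup_leftList A y) (mem_leftList A y), leftTable_eq]
  generalize leftList A y = B
  induction B with
  | nil => simp [sumSnd]
  | cons z B ih =>
    have h1 : sumSnd ((z :: B).map fun z => (z, M (z, k))) =
      M (z, k) + sumSnd (B.map fun z => (z, M (z, k))) := rfl
    rw [h1, List.map_cons, List.sum_cons, List.length_cons]
    push_cast
    have h2 := hM z
    rw [abs_le] at *
    constructor <;> linarith [ih.1, ih.2, h2.1, h2.2]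

/-- A certificate puts the dyadic interval of `p` inside the interval assigned to `y`. -/
theorem Cert.sound {P : Measure (Seq × Seq)} [IsProbabilityMeasure P] (h4 : Cond4 A)
    (hM : ∀ z k, 0 < k → |P.real (cyl2 z) * k - M (z, k)| ≤ 2) {p : S} {y : S × S} {k : ℕ}
    (h : Cert A M p y k) :
    leftEnd P A y ≤ lo p ∧ hi p ≤ leftEnd P A y + P.real (cyl2 y) := by
  obtain ⟨hk, h1, h2⟩ := h
  have hl : (leftTable A M y k).length = (leftList A y).length := by simp [leftTable_eq]
  have e1 := abs_le.1 (abs_leftEnd_sub h4 (hM · k hk) y)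
  have e2 := abs_le.1 (hM y k hk)
  have hk' : (0 : ℝ) < k := by exact_mod_cast hk
  rw [hl, binPow_eq] at h1 h2
  generalize sumSnd (leftTable A M y k) = s at *
  generalize (leftList A y).length = N at *
  generalize leftEnd P A y = L at *
  generalize P.real (cyl2 y) = r at *
  have h1' : ((s : ℝ) + 2 * N) * 2 ^ p.length ≤ binVal p * k := by exact_mod_cast h1
  have h2' : ((binVal p : ℝ) + 1) * k + (2 * N + 2) * 2 ^ p.length ≤
    (s + M (y, k)) * 2 ^ p.length := by exact_mod_cast h2
  have hE : (0 : ℝ) < 2 ^ p.length := by positivity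
  rw [lo, hi, le_div_iff₀ hE, div_le_iff₀ hE]
  constructor
  · refine le_of_mul_le_mul_right (le_trans ?_ h1') hk'
    nlinarith [mul_le_mul_of_nonneg_right e1.2 hE.le]
  · refine le_of_mul_le_mul_right ?_ hk'
    nlinarith [mul_le_mul_of_nonneg_right e1.1 hE.le, mul_le_mul_of_nonneg_right e2.1 hE.le]

/-- Strict inclusion of intervals is eventually certified, since the total error `4 N + 4` in units
of `1 / k` drops below both gaps. -/
theorem exists_cert {P : Measure (Seq × Seq)} [IsProbabilityMeasure P] (h4 : Cond4 A)
    (hM : ∀ z k, 0 < k → |P.real (cyl2 z) * k - M (z, k)| ≤ 2) {p : S} {y : S × S}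
    (hlo : leftEnd P A y < lo p) (hhi : hi p < leftEnd P A y + P.real (cyl2 y)) :
    ∃ k, Cert A M p y k := by
  have hE : (0 : ℝ) < 2 ^ p.length := by positivity
  rw [lo, lt_div_iff₀ hE] at hlo
  rw [hi, div_lt_iff₀ hE] at hhi
  set N := (leftList A y).length with hN
  obtain ⟨k, hk⟩ := exists_nat_gt (max (0 : ℝ) (max
    (4 * N * 2 ^ p.length / (binVal p - leftEnd P A y * 2 ^ p.length))
    ((4 * N + 4) * 2 ^ p.length /
      ((leftEnd P A y + P.real (cyl2 y)) * 2 ^ p.length - (binVal p + 1)))))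
  rw [max_lt_iff, max_lt_iff, div_lt_iff₀ (by linarith), div_lt_iff₀ (by linarith)] at hk
  obtain ⟨hk0, hk1, hk2⟩ := hk
  have hk : 0 < k := by exact_mod_cast hk0
  have hl : (leftTable A M y k).length = N := by simp [leftTable_eq, hN]
  have e1 := abs_le.1 (abs_leftEnd_sub h4 (hM · k hk) y)
  have e2 := abs_le.1 (hM y k hk)
  rw [← hN] at e1
  refine ⟨k, hk, ?_, ?_⟩
  all_goals
    rw [hl, binPow_eq]
    generalize sumSnd (leftTable A M y k) = s at *
    generalize leftEnd P A y = L at *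
    generalize P.real (cyl2 y) = r at *
  · have : ((s : ℝ) + 2 * N) * 2 ^ p.length ≤ binVal p * k := by
      nlinarith [mul_le_mul_of_nonneg_right e1.1 hE.le]
    exact_mod_cast this
  · have : ((binVal p : ℝ) + 1) * k + (2 * N + 2) * 2 ^ p.length ≤
        (s + M (y, k)) * 2 ^ p.length := by
      nlinarith [mul_le_mul_of_nonneg_right e1.2 hE.le, mul_le_mul_of_nonneg_right e2.2 hE.le]
    exact_mod_cast this

end Certificates

/-- An interval of length `r` has a dyadic interval of length at least `r / 8` in its interior. -/
theorem exists_dyadic {L r : ℝ} (hL : 0 ≤ L) (hr : 0 < r) (h1 : L + r ≤ 1) :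
    ∃ p : S, L < lo p ∧ hi p < L + r ∧ (p.length : ℝ) ≤ -Real.logb 2 r + 3 := by
  have hlog : 0 ≤ -Real.logb 2 r := by
    have := Real.logb_nonpos (b := 2) (by norm_num) hr.le (by linarith)
    linarith
  set n := ⌈-Real.logb 2 r⌉₊ + 2 with hn
  have hE : (0 : ℝ) < 2 ^ n := by positivity
  have hrn : 4 ≤ r * 2 ^ n := by
    have h2 : (1 : ℝ) ≤ r * 2 ^ ⌈-Real.logb 2 r⌉₊ := by
      have h3 : (2 : ℝ) ^ (-Real.logb 2 r) ≤ 2 ^ ((⌈-Real.logb 2 r⌉₊ : ℕ) : ℝ) :=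
        Real.rpow_le_rpow_of_exponent_le (by norm_num) (Nat.le_ceil _)
      rw [Real.rpow_neg (by norm_num), Real.rpow_logb (by norm_num) (by norm_num) hr,
        Real.rpow_natCast] at h3
      calc (1 : ℝ) = r * r⁻¹ := (mul_inv_cancel₀ hr.ne').symm
        _ ≤ _ := by gcongr
    rw [hn, pow_add]
    linarith
  set j := ⌊L * 2 ^ n⌋₊ + 1 with hj
  have hj1 : L * 2 ^ n < j := by
    rw [hj]; push_cast; exact Nat.lt_floor_add_one _
  have hj2 : (j : ℝ) ≤ L * 2 ^ n + 1 := by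
    rw [hj]; push_cast
    linarith [Nat.floor_le (a := L * 2 ^ n) (by positivity)]
  have hjn : j < 2 ^ n := by
    have : (j : ℝ) < 2 ^ n := by nlinarith
    exact_mod_cast this
  obtain ⟨p, hp, hpj⟩ := exists_binVal n j hjn
  refine ⟨p, ?_, ?_, ?_⟩
  · rw [lo, hp, hpj, lt_div_iff₀ hE]
    exact hj1
  · rw [hi, hp, hpj, div_lt_iff₀ hE]
    linarith
  · rw [hp, hn]
    push_cast
    linarith [(Nat.ceil_lt_add_one hlog).le]

/-! ### The coding lemma -/

/-- Lemma 2, coding lemma: for a computable P on Ω² and a decidable A ⊆ S²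
satisfying (4), there is a computable monotone g : S∪Ω → (S∪Ω)² and a constant c with
Km_g(x) ≤ −log P(x) + c for all x ∈ A(ω), ω ∈ Ω². -/
theorem coding_lemma (P : Measure (Seq × Seq)) (hP : ComputableProb2 P)
    (A : Set (S × S)) (hdec : ComputablePred (· ∈ A)) (h4 : Cond4 A) :
    ∃ g : SW → SW2, CompMono12 g ∧ ∃ c : ℝ, ∀ ω : Seq × Seq, ∀ x ∈ Asec A ω,
      0 < P (cyl2 x) → ∃ k : ℕ, KmOf12 g (emb2 x) ≤ (k : ℕ∞) ∧
        (k : ℝ) ≤ -Real.logb 2 ((P (cyl2 x)).toReal) + c := by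
  classical
  obtain ⟨hprob, p, hp, happ⟩ := hP
  set M : (S × S) × ℕ → ℕ := fun a => approx (p a) a.2 with hMdef
  have hMc : Computable M := computable_approx hp
  have hM : ∀ z k, 0 < k → |P.real (cyl2 z) * k - M (z, k)| ≤ 2 := fun z k hk =>
    approx_spec measureReal_nonneg hk (happ z k hk)
  let F : Set (S × (S × S)) := {a | a.2 = ([], []) ∨ (a.2 ∈ A ∧ ∃ k, Cert A M a.1 a.2 k)}
  have hFre : RESet F := by
    let f : ℕ → Option (S × (S × S)) := fun n =>
      (Encodable.decode (α := (S × (S × S)) × ℕ) n).bind fun a =>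
        bif decide (a.1.2 = ([], [])) || (decide (a.1.2 ∈ A) && decide (Cert A M a.1.1 a.1.2 a.2))
          then some a.1 else none
    refine ⟨f, ?_, ?_⟩
    · refine Computable.option_bind Computable.decode (Computable.cond ?_
        (Computable.option_some.comp (Computable.fst.comp Computable.snd)) (Computable.const none))
      have h1 : Computable fun a : ℕ × ((S × (S × S)) × ℕ) => a.2.1.2 :=
        Computable.snd.comp (Computable.fst.comp Computable.snd)
      have heq : Computable fun a : S × S => decide (a = ([], [])) :=
        (PrimrecPred.decide (Primrec.eq.comp Primrec.id (Primrec.const ([], [])))).to_comp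
      exact Primrec.or.to_comp.comp (heq.comp h1) (Primrec.and.to_comp.comp (hdec.decide.comp h1)
        ((computablePred_cert A M hdec hMc).decide.comp Computable.snd))
    · ext a
      simp only [F, f, Set.mem_ofPred_eq]
      constructor
      · rintro (h | ⟨h, k, hk⟩)
        · exact ⟨Encodable.encode (a, 0), by simp [h]⟩
        · exact ⟨Encodable.encode (a, k), by simp [h, hk]⟩
      · rintro ⟨n, hn⟩
        obtain ⟨b, -, hb⟩ := Option.bind_eq_some_iff.1 hn
        cases hc : decide (b.1.2 = ([], [])) ||
            (decide (b.1.2 ∈ A) && decide (Cert A M b.1.1 b.1.2 b.2)) with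
        | false => simp [hc] at hb
        | true =>
          rw [hc] at hb
          obtain rfl : b.1 = a := by simpa using hb
          simp only [Bool.or_eq_true, Bool.and_eq_true, decide_eq_true_eq] at hc
          exact hc.imp id fun h => ⟨h.1, _, h.2⟩
  let C : SW → Set (S × S) := fun q => {x | ∃ p' : S, SW.le (emb1 p') q ∧ (p', x) ∈ F}
  have hnil : ∀ a : S × S, Pre2 ([], []) a := fun a => ⟨List.nil_prefix, List.nil_prefix⟩
  -- Intervals of incomparable elements are disjoint, so they cannot share a dyadic interval.
  have hchain1 : ∀ (a b : S) (x y : S × S), a <+: b → x ∈ A → y ∈ A →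
      (∃ k, Cert A M a x k) → (∃ k, Cert A M b y k) → Pre2 x y ∨ Pre2 y x := by
    rintro a b x y hab hx hy ⟨k, hk⟩ ⟨k', hk'⟩
    by_contra hcon
    rw [not_or] at hcon
    have e1 := hk.sound h4 hM
    have e2 := hk'.sound h4 hM
    have e3 := lo_hi_mono hab
    have e4 := lo_lt_hi b
    rcases leftEnd_total (P := P) h4 hx hy hcon.1 hcon.2 with h | h
    · linarith
    · linarith
  have hchain : ∀ q, ∀ x ∈ C q, ∀ y ∈ C q, Pre2 x y ∨ Pre2 y x := by
    rintro q x ⟨a, haq, hx | ⟨hxA, hx⟩⟩ y ⟨b, hbq, hy | ⟨hyA, hy⟩⟩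
    · obtain rfl : x = ([], []) := hx
      exact Or.inl (hnil y)
    · obtain rfl : x = ([], []) := hx
      exact Or.inl (hnil y)
    · obtain rfl : y = ([], []) := hy
      exact Or.inr (hnil x)
    · rcases le_total_of_le haq hbq with h | h
      · exact hchain1 a b x y h hxA hyA hx hy
      · exact (hchain1 b a y x h hyA hxA hy hx).symm
  have hne : ∀ q, (C q).Nonempty := fun q => ⟨([], []), [], by
    cases q with
    | fin y => exact List.nil_prefix
    | inf ω => exact fun i => i.elim0, Or.inl rfl⟩
  choose g hg using fun q => exists_sup2 (C q) (hne q) (hchain q)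
  refine ⟨g, ⟨F, hFre, fun q => ⟨Or.inl rfl, _, hg (emb1 q)⟩, hg⟩, 3, ?_⟩
  intro ω x hx hpos
  have hr : 0 < P.real (cyl2 x) := ENNReal.toReal_pos hpos.ne' (measure_ne_top _ _)
  obtain ⟨d, hlo, hhi, hlen⟩ := exists_dyadic measureReal_nonneg hr
    (leftEnd_add_le_one (P := P) h4 hx.1)
  refine ⟨d.length, ?_, hlen⟩
  have hle : SW2.le (emb2 x) (g (.fin d)) :=
    (hg (.fin d)).1 _ ⟨x, ⟨d, List.prefix_rfl, Or.inr ⟨hx.1, exists_cert h4 hM hlo hhi⟩⟩, rfl⟩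
  exact iInf₂_le (f := fun (p : SW) (_ : SW2.le (emb2 x) (g p)) => SW.len p) (.fin d) hle

end AlgRand
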